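/- arXiv:2110.11032 — 2 statements merged into one kernel-verified Lean document; each statement's English description precedes it below -/
import Mathlib

section
/- Let m ≥ 1, let U = R + iS be an m×m unitary matrix with R, S real m×m matrices, let Λ = diag(λ₁,…,λ_m) be a real diagonal m×m matrix, and suppose B = U Λ Uᵗ (so B is complex symmetric). Write B = B⁽¹⁾ + i B⁽²⁾ with B⁽¹⁾, B⁽²⁾ real, and define the 2m×2m real matrices K = [[B⁽¹⁾, B⁽²⁾],[B⁽²⁾, −B⁽¹⁾]], T = [[R, S],[S, −R]] and Λ̃ = [[Λ, 0],[0, −Λ]]. Then T is an orthogonal matrix and K = T Λ̃ Tᵗ; in particular the eigenvalues of K are exactly λ₁,…,λ_m together with −λ₁,…,−λ_m. -/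
open Matrix Polynomial

/-- If `U = R + iS` is unitary, `Λ = diagonal λ`, `B = U Λ Uᵗ`, and
`K`, `T`, `Λ̃` are the associated `2m × 2m` block matrices, then `T` is orthogonal,
`K = T Λ̃ Tᵗ`, and the eigenvalues of `K` are exactly `λ₁, …, λ_m, −λ₁, …, −λ_m`
(expressed via the characteristic polynomial of `K`). -/
theorem stmt0 (m : ℕ) (hm : 1 ≤ m)
    (R S : Matrix (Fin m) (Fin m) ℝ) (lam : Fin m → ℝ)
    (U : Matrix (Fin m) (Fin m) ℂ)
    (hU : U = R.map (Complex.ofReal) + Complex.I • S.map (Complex.ofReal))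
    (hUunitary : U ∈ Matrix.unitaryGroup (Fin m) ℂ)
    (B : Matrix (Fin m) (Fin m) ℂ)
    (hB : B = U * Matrix.diagonal (fun i => (lam i : ℂ)) * Uᵀ)
    (K : Matrix (Fin m ⊕ Fin m) (Fin m ⊕ Fin m) ℝ)
    (hK : K = Matrix.fromBlocks (B.map Complex.re) (B.map Complex.im)
      (B.map Complex.im) (-(B.map Complex.re)))
    (T : Matrix (Fin m ⊕ Fin m) (Fin m ⊕ Fin m) ℝ)
    (hT : T = Matrix.fromBlocks R S S (-R))
    (Lt : Matrix (Fin m ⊕ Fin m) (Fin m ⊕ Fin m) ℝ)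
    (hLt : Lt = Matrix.fromBlocks (Matrix.diagonal lam) 0 0 (-(Matrix.diagonal lam))) :
    T * Tᵀ = 1 ∧ Tᵀ * T = 1 ∧ K = T * Lt * Tᵀ ∧
      K.charpoly = ∏ i : Fin m, ((X - C (lam i)) * (X + C (lam i))) := by
  have hTT : T * Tᵀ = 1 := by
    have h := (Matrix.mem_unitaryGroup_iff).1 hUunitary
    have hre : R * Rᵀ + S * Sᵀ = 1 := by
      ext i j
      have h2 := congrArg Complex.re (congrFun (congrFun h i) j)
      simp [hU, Matrix.mul_apply, Matrix.star_apply, Matrix.one_apply, apply_ite Complex.re,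
        Finset.sum_add_distrib] at h2
      simpa [Matrix.mul_apply, Matrix.one_apply] using h2
    have him : S * Rᵀ = R * Sᵀ := by
      ext i j
      have h2 := congrArg Complex.im (congrFun (congrFun h i) j)
      simp [hU, Matrix.mul_apply, Matrix.star_apply, Matrix.one_apply, apply_ite Complex.im,
        Finset.sum_add_distrib] at h2
      simp only [Matrix.mul_apply, Matrix.transpose_apply]
      linarith
    rw [hT, Matrix.fromBlocks_transpose, Matrix.fromBlocks_multiply, ← Matrix.fromBlocks_one]
    simp [hre, him, add_comm (S * Sᵀ)]
  have hTT' : Tᵀ * T = 1 := mul_eq_one_comm.1 hTT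
  have hKT : K = T * Lt * Tᵀ := by
    have hre : B.map Complex.re
        = R * Matrix.diagonal lam * Rᵀ - S * Matrix.diagonal lam * Sᵀ := by
      ext i j
      rw [Matrix.map_apply, hB, Matrix.mul_apply (N := Uᵀ), Matrix.sub_apply,
        Matrix.mul_apply (N := Rᵀ), Matrix.mul_apply (N := Sᵀ), ← Finset.sum_sub_distrib]
      simp only [Matrix.mul_diagonal, Matrix.transpose_apply, hU]
      simp
      try (refine Finset.sum_congr rfl fun x _ => ?_; ring)
    have him : B.map Complex.im
        = R * Matrix.diagonal lam * Sᵀ + S * Matrix.diagonal lam * Rᵀ := by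
      ext i j
      rw [Matrix.map_apply, hB, Matrix.mul_apply (N := Uᵀ), Matrix.add_apply,
        Matrix.mul_apply (N := Sᵀ), Matrix.mul_apply (N := Rᵀ), ← Finset.sum_add_distrib]
      simp only [Matrix.mul_diagonal, Matrix.transpose_apply, hU]
      simp
      try (refine Finset.sum_congr rfl fun x _ => ?_; ring)
    rw [hK, hT, hLt, hre, him, Matrix.fromBlocks_transpose, Matrix.fromBlocks_multiply,
      Matrix.fromBlocks_multiply]
    congr 1 <;> simp [-Matrix.diagonal_neg] <;> abel
  refine ⟨hTT, hTT', hKT, ?_⟩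
  rw [hKT, Matrix.mul_assoc, Matrix.charpoly_mul_comm, Matrix.mul_assoc, hTT', Matrix.mul_one, hLt,
    Matrix.charpoly_fromBlocks_zero₁₂, Finset.prod_mul_distrib, Matrix.diagonal_neg,
    Matrix.charpoly_diagonal, Matrix.charpoly_diagonal]
  simp
end

section
/- Let m ≥ 1 and let B_m = (b_{kℓ})_{1≤k,ℓ≤m} be a complex symmetric m×m matrix (b_{kℓ} = b_{ℓk}), with associated 2m×2m real symmetric matrix K_m. Then det(I_{2m} + K_m) = det(I_m − B_m* B_m), where B_m* is the conjugate transpose of B_m; in particular both determinants are real. -/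
open Matrix

/-- For a complex symmetric matrix `B_m` with associated real symmetric
block matrix `K_m`, one has `det(I + K_m) = det(I − B_m* B_m)`; in particular both
determinants are real (the left-hand side is a real determinant coerced to `ℂ`). -/
theorem stmt3 (m : ℕ) (hm : 1 ≤ m) (b : Fin m → Fin m → ℂ)
    (hsym : ∀ k l, b k l = b l k)
    (B : Matrix (Fin m) (Fin m) ℂ) (hB : B = Matrix.of b)
    (K : Matrix (Fin m ⊕ Fin m) (Fin m ⊕ Fin m) ℝ)
    (hK : K = Matrix.fromBlocks
      (Matrix.of fun k l => (b k l).re) (Matrix.of fun k l => (b k l).im)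
      (Matrix.of fun k l => (b k l).im) (-(Matrix.of fun k l => (b k l).re))) :
    (((1 + K).det : ℝ) : ℂ) = (1 - Bᴴ * B).det := by
  have hBH : Bᴴ = Matrix.of fun k l => (starRingEnd ℂ) (b k l) := by
    ext k l
    simp [hB, Matrix.conjTranspose_apply, hsym l k]
  have h1 : (((1 + K).det : ℝ) : ℂ) = ((1 + K).map (Complex.ofRealHom)).det := by
    have := RingHom.map_det Complex.ofRealHom (1 + K)
    simpa using this
  have h2 : (1 - Bᴴ * B).det = (Matrix.fromBlocks 1 B Bᴴ 1).det := by
    rw [Matrix.det_fromBlocks_one₁₁]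
  let P : Matrix (Fin m ⊕ Fin m) (Fin m ⊕ Fin m) ℂ :=
    Matrix.fromBlocks 1 (Complex.I • 1) 1 (-(Complex.I • 1))
  have hP : P.det ≠ 0 := by
    have e : (-(Complex.I • 1) - 1 * (Complex.I • 1) : Matrix (Fin m) (Fin m) ℂ)
        = (-(2 * Complex.I)) • 1 := by
      rw [Matrix.one_mul, ← neg_smul, ← sub_smul]
      congr 1
      ring
    simp only [P]
    rw [Matrix.det_fromBlocks_one₁₁, e, Matrix.det_smul, Matrix.det_one, mul_one]
    exact pow_ne_zero _ (by simp)
  have hM : (1 + K).map (Complex.ofRealHom) = Matrix.fromBlocks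
      (1 + Matrix.of fun k l => ((b k l).re : ℂ)) (Matrix.of fun k l => ((b k l).im : ℂ))
      (Matrix.of fun k l => ((b k l).im : ℂ)) (1 - Matrix.of fun k l => ((b k l).re : ℂ)) := by
    rw [hK]
    ext (i | i) (j | j) <;> by_cases h : i = j <;> simp [Matrix.one_apply, h, sub_eq_add_neg]
  have key : P * (1 + K).map (Complex.ofRealHom) = Matrix.fromBlocks 1 B Bᴴ 1 * P := by
    rw [hM, hBH, hB]
    simp only [P, Matrix.fromBlocks_multiply]
    ext (i | i) (j | j) <;> by_cases h : i = j <;>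
      simp [Matrix.one_apply, h] <;> apply Complex.ext <;> simp <;> ring
  have := congrArg Matrix.det key
  rw [Matrix.det_mul, Matrix.det_mul, mul_comm] at this
  rw [h1, h2]
  exact mul_right_cancel₀ hP this
end
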